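/- arXiv:1807.01333 — 3 statements merged into one kernel-verified Lean document; each statement's English description precedes it below -/
import Mathlib

section
/- Let w be the constant welfare basis function w(j) = 1 for all j, and let f^{es}(j) = 1/j for all j ≥ 1. Then the price of anarchy over games with arbitrarily many agents equals one half: inf_{n ≥ 1} PoA(f^{es}, w, n) = 1/2. -/
/-!
Equal sharing splits the value of every covered resource among its users, so the utilities
of an allocation sum to its welfare (`sum_utility`).

*Lower bound.* Let `a` be an equilibrium and `b` any allocation. If agent `i` deviates to `b i`,
it collects the full value of every resource of `b i` that `a` leaves uncovered. Summed over `i`,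
these deviation payoffs are at least `W(b) - W(a)`, while the equilibrium condition bounds
them by `∑ U_i(a) = W(a)`; hence `W(b) ≤ 2 W(a)` (`welfare_le_two_mul`). As `worstNash` is an
infimum that is `0` on the empty set, existence of an equilibrium is needed too: the games are
congestion games, and a maximizer of Rosenthal's potential is an equilibrium (`exists_isNash`).

*Upper bound.* In `tightGame n`, all `n` agents may share a resource of value `n`, and each has a
private resource of value `1`. Everybody sharing is an equilibrium of welfare `n`, and the optimum
is at least `2n - 1`. The ratio `n / (2n - 1)` tends to `1/2`.
-/

/-- A resource allocation game with at most `n` agents: a finite resource set `R`,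
a nonnegative value `v r` for each resource, `m ≤ n` agents, and for each agent a
nonempty finite collection of admissible choices (subsets of `R`). -/
structure RAGame (n : ℕ) where
  R : Type
  [fintypeR : Fintype R]
  [decEqR : DecidableEq R]
  v : R → ℝ
  v_nonneg : ∀ r, 0 ≤ v r
  m : ℕ
  m_le : m ≤ n
  A : Fin m → Finset (Finset R)
  A_ne : ∀ i, (A i).Nonempty

attribute [instance] RAGame.fintypeR RAGame.decEqR

namespace RAGame

variable {n : ℕ}

/-- An allocation: each agent selects an admissible choice. -/
def Alloc (G : RAGame n) : Type := (i : Fin G.m) → {s : Finset G.R // s ∈ G.A i}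

/-- `|a|_r`: the number of agents selecting resource `r` in allocation `a`. -/
def count (G : RAGame n) (a : G.Alloc) (r : G.R) : ℕ :=
  (Finset.univ.filter fun i => r ∈ (a i).val).card

/-- The welfare `W(a) = Σ_{r covered} v_r · w(|a|_r)`. -/
def welfare (G : RAGame n) (w : ℕ → ℝ) (a : G.Alloc) : ℝ :=
  ∑ r ∈ Finset.univ.filter (fun r => 0 < G.count a r), G.v r * w (G.count a r)

/-- Agent `i`'s utility `U_i(a) = Σ_{r ∈ a_i} v_r · f(|a|_r)`. -/
def utility (G : RAGame n) (f : ℕ → ℝ) (a : G.Alloc) (i : Fin G.m) : ℝ :=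
  ∑ r ∈ (a i).val, G.v r * f (G.count a r)

/-- Pure Nash equilibrium: no unilateral deviation improves an agent's utility. -/
def IsNash (G : RAGame n) (f : ℕ → ℝ) (a : G.Alloc) : Prop :=
  ∀ (i : Fin G.m) (s : {s : Finset G.R // s ∈ G.A i}),
    G.utility f (Function.update a i s) i ≤ G.utility f a i

/-- The optimal welfare `max_{a ∈ A} W(a)`. -/
noncomputable def optVal (G : RAGame n) (w : ℕ → ℝ) : ℝ :=
  sSup { x : ℝ | ∃ a : G.Alloc, x = G.welfare w a }

/-- The worst equilibrium welfare `min_{a ∈ NE(G)} W(a)`. -/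
noncomputable def worstNash (G : RAGame n) (f w : ℕ → ℝ) : ℝ :=
  sInf { x : ℝ | ∃ a : G.Alloc, G.IsNash f a ∧ x = G.welfare w a }

end RAGame

/-- The price of anarchy `PoA(f,w,n)` over the class `G_{f,w}^n` of games with at
most `n` agents and strictly positive optimal welfare. -/
noncomputable def PoA (f w : ℕ → ℝ) (n : ℕ) : ℝ :=
  sInf { x : ℝ | ∃ G : RAGame n, 0 < G.optVal w ∧ x = G.worstNash f w / G.optVal w }

namespace RAGame

variable {n : ℕ}

/-! ### Counting users of a resource -/

lemma sum_ite_mem_univ {R : Type} [Fintype R] [DecidableEq R] (s : Finset R) (g : R → ℝ) :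
    (∑ r, if r ∈ s then g r else 0) = ∑ r ∈ s, g r := by
  simp

instance (G : RAGame n) : Finite G.Alloc := by
  unfold Alloc; infer_instance

instance (G : RAGame n) : Nonempty G.Alloc :=
  ⟨fun i => ⟨(G.A_ne i).choose, (G.A_ne i).choose_spec⟩⟩

/-- The number of agents other than `i` selecting `r` in `a`. -/
def others (G : RAGame n) (a : G.Alloc) (i : Fin G.m) (r : G.R) : ℕ :=
  (Finset.univ.filter fun j => j ≠ i ∧ r ∈ (a j).val).card

lemma count_eq (G : RAGame n) (a : G.Alloc) (i : Fin G.m) (r : G.R) :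
    G.count a r = G.others a i r + if r ∈ (a i).val then 1 else 0 := by
  unfold count others
  split_ifs with h
  · have e : (Finset.univ.filter fun j => r ∈ (a j).val) =
        insert i (Finset.univ.filter fun j => j ≠ i ∧ r ∈ (a j).val) := by
      ext j
      by_cases hj : j = i
      · subst hj; simp [h]
      · simp [hj]
    rw [e, Finset.card_insert_of_notMem (by simp)]
  · rw [add_zero]
    congr 1
    ext j
    simp only [Finset.mem_filter, Finset.mem_univ, true_and]
    constructor
    · intro hj
      exact ⟨fun e => h (e ▸ hj), hj⟩
    · exact fun hj => hj.2

lemma count_pos (G : RAGame n) (a : G.Alloc) (i : Fin G.m) (r : G.R) (h : r ∈ (a i).val) :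
    0 < G.count a r := by
  rw [G.count_eq a i r, if_pos h]
  omega

lemma val_update_self (G : RAGame n) (a : G.Alloc) (i : Fin G.m)
    (s : {s : Finset G.R // s ∈ G.A i}) : (Function.update a i s i).val = s.val :=
  congrArg Subtype.val
    (Function.update_self (β := fun i => {s : Finset G.R // s ∈ G.A i}) i s a)

lemma val_update_of_ne (G : RAGame n) (a : G.Alloc) {i j : Fin G.m} (h : j ≠ i)
    (s : {s : Finset G.R // s ∈ G.A i}) : (Function.update a i s j).val = (a j).val :=
  congrArg Subtype.val
    (Function.update_of_ne (β := fun i => {s : Finset G.R // s ∈ G.A i}) h s a)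

lemma others_update (G : RAGame n) (a : G.Alloc) (i : Fin G.m)
    (s : {s : Finset G.R // s ∈ G.A i}) (r : G.R) :
    G.others (Function.update a i s) i r = G.others a i r := by
  unfold others
  congr 1
  ext j
  simp only [Finset.mem_filter, Finset.mem_univ, true_and]
  refine and_congr_right fun hj => ?_
  rw [val_update_of_ne G a hj s]

/-! ### Existence of equilibria -/

/-- Rosenthal's potential `∑_r v_r (f 1 + ⋯ + f |a|_r)`. -/
def potential (G : RAGame n) (f : ℕ → ℝ) (a : G.Alloc) : ℝ :=
  ∑ r, G.v r * ∑ k ∈ Finset.range (G.count a r), f (k + 1)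

/-- The potential splits into agent `i`'s utility and a part not involving `i`'s choice. -/
lemma potential_eq (G : RAGame n) (f : ℕ → ℝ) (a : G.Alloc) (i : Fin G.m) :
    G.potential f a =
      (∑ r, G.v r * ∑ k ∈ Finset.range (G.others a i r), f (k + 1)) + G.utility f a i := by
  unfold potential utility
  rw [← sum_ite_mem_univ (a i).val, ← Finset.sum_add_distrib]
  refine Finset.sum_congr rfl fun r _ => ?_
  rw [G.count_eq a i r]
  split_ifs with h
  · rw [Finset.sum_range_succ]; ring
  · simp

lemma exists_isNash (G : RAGame n) (f : ℕ → ℝ) : ∃ a : G.Alloc, G.IsNash f a := by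
  obtain ⟨a, ha⟩ := Finite.exists_max (G.potential f)
  refine ⟨a, fun i s => ?_⟩
  have h := ha (Function.update a i s)
  rw [G.potential_eq f a i, G.potential_eq f (Function.update a i s) i] at h
  simp only [others_update] at h
  linarith

/-! ### Equilibria cover at least half of the optimum -/

lemma sum_utility (G : RAGame n) (a : G.Alloc) :
    ∑ i, G.utility (fun j => 1 / (j : ℝ)) a i = G.welfare (fun _ => 1) a := by
  unfold utility welfare
  rw [Finset.sum_filter]
  simp_rw [← sum_ite_mem_univ (a _).val]
  rw [Finset.sum_comm]
  refine Finset.sum_congr rfl fun r _ => ?_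
  rw [← Finset.sum_filter, Finset.sum_const, nsmul_eq_mul]
  change (G.count a r : ℝ) * _ = _
  split_ifs with h
  · have : (G.count a r : ℝ) ≠ 0 := by exact_mod_cast h.ne'
    field_simp
  · have : G.count a r = 0 := by omega
    simp [this]

/-- A unilateral deviation to `s` pays at least the value of what `s` newly covers. -/
lemma deviation_ge (G : RAGame n) (a : G.Alloc) (i : Fin G.m)
    (s : {s : Finset G.R // s ∈ G.A i}) :
    (∑ r, if r ∈ s.val then (if G.count a r = 0 then G.v r else 0) else 0) ≤
      G.utility (fun j => 1 / (j : ℝ)) (Function.update a i s) i := by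
  unfold utility
  rw [sum_ite_mem_univ, val_update_self]
  refine Finset.sum_le_sum fun r hr => ?_
  split_ifs with h
  · have h1 : G.count (Function.update a i s) r = 1 := by
      have h2 := G.count_eq a i r
      rw [G.count_eq (Function.update a i s) i r, others_update, val_update_self, if_pos hr]
      omega
    rw [h1]; simp
  · exact mul_nonneg (G.v_nonneg r) (by positivity)

lemma welfare_le_two_mul (G : RAGame n) (a b : G.Alloc)
    (ha : G.IsNash (fun j => 1 / (j : ℝ)) a) :
    G.welfare (fun _ => 1) b ≤ 2 * G.welfare (fun _ => 1) a := by
  have h1 : ∑ i, (∑ r, if r ∈ (b i).val then (if G.count a r = 0 then G.v r else 0) else 0) ≤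
      G.welfare (fun _ => 1) a := by
    rw [← G.sum_utility a]
    exact Finset.sum_le_sum fun i _ => (G.deviation_ge a i (b i)).trans (ha i (b i))
  have h2 : G.welfare (fun _ => 1) b ≤ G.welfare (fun _ => 1) a +
      ∑ i, (∑ r, if r ∈ (b i).val then (if G.count a r = 0 then G.v r else 0) else 0) := by
    rw [Finset.sum_comm]
    unfold welfare
    rw [Finset.sum_filter, Finset.sum_filter, ← Finset.sum_add_distrib]
    refine Finset.sum_le_sum fun r _ => ?_
    rw [← Finset.sum_filter, Finset.sum_const, nsmul_eq_mul]
    change _ ≤ _ + (G.count b r : ℝ) * _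
    have hv := G.v_nonneg r
    by_cases hb : 0 < G.count b r
    · have hb' : (1 : ℝ) ≤ G.count b r := by exact_mod_cast hb
      by_cases hc : G.count a r = 0
      · simp only [hb, hc, if_true, lt_irrefl, if_false]
        nlinarith
      · simp [hb, hc, Nat.pos_of_ne_zero hc]
    · have hb0 : G.count b r = 0 := by omega
      simp only [hb0, lt_irrefl, if_false]
      split_ifs <;> simp [hv]
  linarith

lemma welfare_nonneg (G : RAGame n) (a : G.Alloc) : 0 ≤ G.welfare (fun _ => 1) a :=
  Finset.sum_nonneg fun r _ => by simpa using G.v_nonneg r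

lemma half_le_ratio (G : RAGame n) (h : 0 < G.optVal (fun _ => 1)) :
    1 / 2 ≤ G.worstNash (fun j => 1 / (j : ℝ)) (fun _ => 1) / G.optVal (fun _ => 1) := by
  rw [le_div_iff₀ h]
  obtain ⟨a₀, ha₀⟩ := G.exists_isNash (fun j => 1 / (j : ℝ))
  refine le_csInf ⟨_, a₀, ha₀, rfl⟩ ?_
  rintro x ⟨a, ha, rfl⟩
  have : G.optVal (fun _ => 1) ≤ 2 * G.welfare (fun _ => 1) a := by
    refine csSup_le ⟨_, a, rfl⟩ ?_
    rintro y ⟨b, rfl⟩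
    exact G.welfare_le_two_mul a b ha
  linarith

/-! ### A family of games with ratio tending to one half -/

lemma welfare_le_optVal (G : RAGame n) (w : ℕ → ℝ) (a : G.Alloc) :
    G.welfare w a ≤ G.optVal w := by
  refine le_csSup ?_ ⟨a, rfl⟩
  refine (Set.Finite.subset (Set.finite_range (G.welfare w)) ?_).bddAbove
  rintro x ⟨b, rfl⟩
  exact ⟨b, rfl⟩

lemma worstNash_le (G : RAGame n) (f : ℕ → ℝ) (a : G.Alloc) (ha : G.IsNash f a) :
    G.worstNash f (fun _ => 1) ≤ G.welfare (fun _ => 1) a := by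
  refine csInf_le ⟨0, ?_⟩ ⟨a, ha, rfl⟩
  rintro x ⟨b, -, rfl⟩
  exact G.welfare_nonneg b

/-- The worst-case game: `none` is a resource of value `n` open to every agent, and `some i` is a
resource of value `1` open to agent `i` only. -/
def tightGame (n : ℕ) : RAGame n where
  R := Option (Fin n)
  v r := r.elim (n : ℝ) (fun _ => 1)
  v_nonneg r := by cases r <;> simp
  m := n
  m_le := le_rfl
  A i := {{none}, {some i}}
  A_ne i := by simp

lemma mem_tightGame_A (n : ℕ) (i : Fin n) (s : Finset (Option (Fin n))) :
    s ∈ (tightGame n).A i ↔ s = {none} ∨ s = {some i} := by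
  change s ∈ ({{none}, {some i}} : Finset (Finset (Option (Fin n)))) ↔ _
  simp

/-- The equilibrium in which all agents use the common resource. -/
def tightNash (n : ℕ) : (tightGame n).Alloc :=
  fun i => ⟨({none} : Finset (Option (Fin n))), (mem_tightGame_A n i _).2 (Or.inl rfl)⟩

/-- One agent uses the common resource, the others their private ones. -/
def tightOpt (n : ℕ) : (tightGame (n + 1)).Alloc :=
  fun (i : Fin (n + 1)) =>
    ⟨if i = 0 then ({none} : Finset (Option (Fin (n + 1)))) else {some i},
      (mem_tightGame_A (n + 1) i _).2 (ite_eq_or_eq _ _ _)⟩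

lemma tightNash_isNash (n : ℕ) :
    (tightGame n).IsNash (fun j => 1 / (j : ℝ)) (tightNash n) := by
  intro i s
  have hn : (n : ℝ) ≠ 0 := by
    have : 0 < n := i.pos
    exact_mod_cast this.ne'
  have hcount : (tightGame n).count (tightNash n) none = n := by
    have : (Finset.univ.filter fun j : Fin n =>
        (none : Option (Fin n)) ∈ ({none} : Finset (Option (Fin n)))).card = n := by simp
    exact this
  have hU : (tightGame n).utility (fun j => 1 / (j : ℝ)) (tightNash n) i = 1 := by
    have h : (tightGame n).utility (fun j => 1 / (j : ℝ)) (tightNash n) i =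
        (n : ℝ) * (1 / ((tightGame n).count (tightNash n) none : ℝ)) :=
      Finset.sum_singleton _ _
    rw [h, hcount]
    field_simp
  obtain ⟨s, hs⟩ := s
  rcases (mem_tightGame_A n i s).1 hs with rfl | rfl
  · have : Function.update (tightNash n) i ⟨_, hs⟩ = tightNash n := Function.update_eq_self i _
    rw [this]
  · rw [hU]
    unfold utility
    rw [val_update_self]
    have h : ∀ g : Option (Fin n) → ℝ, ∑ r ∈ ({some i} : Finset (Option (Fin n))), g r = g (some i) :=
      fun g => Finset.sum_singleton _ _
    refine (h _).trans_le ?_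
    -- The private resource has value `1`, and `1 / k ≤ 1` for every natural number `k`.
    change (1 : ℝ) * (1 / (_ : ℕ)) ≤ 1
    rw [one_mul, one_div]
    exact Nat.cast_inv_le_one _

lemma tightNash_welfare (n : ℕ) :
    (tightGame n).welfare (fun _ => 1) (tightNash n) ≤ n := by
  unfold welfare
  have hsub : (Finset.univ.filter fun r => 0 < (tightGame n).count (tightNash n) r) ⊆
      ({none} : Finset (Option (Fin n))) := by
    intro r hr
    obtain ⟨j, hj⟩ := Finset.card_pos.1 (Finset.mem_filter.1 hr).2
    exact (Finset.mem_filter.1 hj).2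
  refine (Finset.sum_le_sum_of_subset_of_nonneg hsub fun r _ _ => ?_).trans ?_
  · simpa using (tightGame n).v_nonneg r
  · refine (Finset.sum_singleton _ _).trans_le ?_
    change (n : ℝ) * 1 ≤ n
    simp

lemma tightOpt_welfare (n : ℕ) :
    (2 * n + 1 : ℝ) ≤ (tightGame (n + 1)).welfare (fun _ => 1) (tightOpt n) := by
  have hcov : ∀ r ∈ (Finset.univ.erase (some 0) : Finset (Option (Fin (n + 1)))),
      0 < (tightGame (n + 1)).count (tightOpt n) r := by
    intro r hr
    rcases r with _ | j
    · refine count_pos _ _ (0 : Fin (n + 1)) _ ?_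
      change none ∈ (if (0 : Fin (n + 1)) = 0 then ({none} : Finset (Option (Fin (n + 1))))
        else {some 0})
      simp
    · refine count_pos _ _ j _ ?_
      change some j ∈ (if j = 0 then ({none} : Finset (Option (Fin (n + 1)))) else {some j})
      have : j ≠ 0 := by simpa using hr
      simp [this]
  unfold welfare
  refine le_trans (le_of_eq ?_) (Finset.sum_le_sum_of_subset_of_nonneg
    (fun r hr => Finset.mem_filter.2 ⟨Finset.mem_univ r, hcov r hr⟩)
    fun r _ _ => mul_nonneg ((tightGame (n + 1)).v_nonneg r) zero_le_one)
  change _ = ∑ r ∈ (Finset.univ.erase (some 0) : Finset (Option (Fin (n + 1)))),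
    (r.elim ((n + 1 : ℕ) : ℝ) (fun _ => 1) * 1)
  rw [Finset.sum_erase_eq_sub (Finset.mem_univ _), Fintype.sum_option]
  simp
  ring

end RAGame

open RAGame

/-! ### The price of anarchy -/

lemma half_le_PoA {n : ℕ} (hn : 1 ≤ n) :
    1 / 2 ≤ PoA (fun j => 1 / (j : ℝ)) (fun _ => (1 : ℝ)) n := by
  -- Nonemptiness matters: the infimum over an empty class would be `0`.
  obtain ⟨k, rfl⟩ : ∃ k, n = k + 1 := ⟨n - 1, by omega⟩
  have hpos : 0 < (tightGame (k + 1)).optVal (fun _ => 1) :=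
    lt_of_lt_of_le (by positivity)
      ((tightOpt_welfare k).trans (welfare_le_optVal _ _ _))
  refine le_csInf ⟨_, tightGame (k + 1), hpos, rfl⟩ ?_
  rintro x ⟨G, hG, rfl⟩
  exact G.half_le_ratio hG

lemma PoA_le (k : ℕ) :
    PoA (fun j => 1 / (j : ℝ)) (fun _ => (1 : ℝ)) (k + 1) ≤ (k + 1) / (2 * k + 1) := by
  have hopt := (tightOpt_welfare k).trans (welfare_le_optVal _ _ _)
  have hpos : 0 < (tightGame (k + 1)).optVal (fun _ => 1) :=
    lt_of_lt_of_le (by positivity) hopt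
  have hw := ((tightGame (k + 1)).worstNash_le _ _ (tightNash_isNash (k + 1))).trans
    (tightNash_welfare (k + 1))
  push_cast at hw
  refine le_trans (csInf_le ⟨1 / 2, ?_⟩ ⟨tightGame (k + 1), hpos, rfl⟩) ?_
  · rintro x ⟨G, hG, rfl⟩
    exact G.half_le_ratio hG
  · exact div_le_div₀ (by positivity) hw (by positivity) hopt

/-- Theorem 1(iii), first part: for the constant welfare basis `w ≡ 1` (weighted
maximum coverage) and the equal-share mechanism `f^{es}(j) = 1/j`, the price of
anarchy over games with arbitrarily many agents is `1/2`. -/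
theorem poa_equal_share_coverage :
    sInf { x : ℝ | ∃ n : ℕ, 1 ≤ n ∧
        x = PoA (fun j => 1 / (j : ℝ)) (fun _ => (1 : ℝ)) n } = 1 / 2 := by
  have hlb : ∀ x ∈ { x : ℝ | ∃ n : ℕ, 1 ≤ n ∧
      x = PoA (fun j => 1 / (j : ℝ)) (fun _ => (1 : ℝ)) n }, 1 / 2 ≤ x := by
    rintro x ⟨n, hn, rfl⟩
    exact half_le_PoA hn
  refine le_antisymm (le_of_forall_pos_le_add fun ε hε => ?_) (le_csInf ⟨_, 1, le_rfl, rfl⟩ hlb)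
  obtain ⟨k, hk⟩ := exists_nat_gt (1 / ε)
  refine (csInf_le ⟨1 / 2, hlb⟩ ⟨k + 1, by omega, rfl⟩).trans ((PoA_le k).trans ?_)
  rw [div_lt_iff₀ hε] at hk
  have hk0 : (0 : ℝ) ≤ k := k.cast_nonneg
  rw [div_le_iff₀ (by positivity)]
  nlinarith
end

section
/- Let w : {1,…,n} → ℝ with w(j) > 0 for all j and f : {1,…,n} → ℝ with f(1) > 0; set f(0) = w(0) = f(n+1) = w(n+1) = 0. For every θ : I → ℝ with θ(a,x,b) ≥ 0 for all (a,x,b) ∈ I satisfying Σ_{(a,x,b)∈I} [a·f(a+x) − b·f(a+x+1)]·θ(a,x,b) ≥ 0 and Σ_{(a,x,b)∈I} w(a+x)·θ(a,x,b) = 1, there exists a resource allocation game with exactly n agents (in the class G_{f,w}^n), an allocation a^e of that game which is a pure Nash equilibrium with welfare W(a^e) = 1, and an allocation a^{opt} with welfare W(a^{opt}) = Σ_{(a,x,b)∈I} w(b+x)·θ(a,x,b). -/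
/-- The index set `I = {(a,x,b) ∈ ℕ³ : 1 ≤ a+x+b ≤ n}`. -/
def indexSet (n : ℕ) : Finset (ℕ × ℕ × ℕ) :=
  ((Finset.range (n+1)) ×ˢ (Finset.range (n+1)) ×ˢ (Finset.range (n+1))).filter
    (fun p => 1 ≤ p.1 + p.2.1 + p.2.2 ∧ p.1 + p.2.1 + p.2.2 ≤ n)

/-- The reduced index set `I_R = {(a,x,b) ∈ I : a·x·b = 0 or a+x+b = n}`. -/
def indexSetR (n : ℕ) : Finset (ℕ × ℕ × ℕ) :=
  (indexSet n).filter (fun p => p.1 * p.2.1 * p.2.2 = 0 ∨ p.1 + p.2.1 + p.2.2 = n)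

/-- Feasibility for the primal linear program (6):
`θ ≥ 0`, `Σ [a f(a+x) − b f(a+x+1)] θ(a,x,b) ≥ 0`, `Σ w(a+x) θ(a,x,b) = 1`. -/
def PrimalFeasible (f w : ℕ → ℝ) (n : ℕ) (θ : ℕ × ℕ × ℕ → ℝ) : Prop :=
  (∀ p ∈ indexSet n, 0 ≤ θ p) ∧
  0 ≤ ∑ p ∈ indexSet n,
      ((p.1 : ℝ) * f (p.1 + p.2.1) - (p.2.2 : ℝ) * f (p.1 + p.2.1 + 1)) * θ p ∧
  ∑ p ∈ indexSet n, w (p.1 + p.2.1) * θ p = 1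

/-- Objective of the primal linear program: `Σ w(b+x) θ(a,x,b)`. -/
def primalObj (w : ℕ → ℝ) (n : ℕ) (θ : ℕ × ℕ × ℕ → ℝ) : ℝ :=
  ∑ p ∈ indexSet n, w (p.2.2 + p.2.1) * θ p

/-- The dual constraint at index `(a,x,b)`:
`w(b+x) − μ w(a+x) + λ [a f(a+x) − b f(a+x+1)] ≤ 0`. -/
def DualConstr (f w : ℕ → ℝ) (lam mu : ℝ) (p : ℕ × ℕ × ℕ) : Prop :=
  w (p.2.2 + p.2.1) - mu * w (p.1 + p.2.1) +
      lam * ((p.1 : ℝ) * f (p.1 + p.2.1) - (p.2.2 : ℝ) * f (p.1 + p.2.1 + 1)) ≤ 0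

open Finset

namespace CyclicGame

lemma card_window (n lo hi : ℕ) (h : hi ≤ n) :
    (univ.filter fun k : Fin n => lo ≤ k.val ∧ k.val < hi).card = hi - lo := by
  rw [← Nat.card_Ico, ← card_map Fin.valEmbedding]
  congr 1
  ext k
  simp only [mem_map, mem_filter, mem_univ, true_and, Fin.valEmbedding_apply, mem_Ico]
  constructor
  · rintro ⟨k, hk, rfl⟩
    exact hk
  · intro hk
    exact ⟨⟨k, by omega⟩, hk, rfl⟩

lemma card_window_shift (n lo hi : ℕ) [NeZero n] (h : hi ≤ n) (j : Fin n) :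
    (univ.filter fun i : Fin n => lo ≤ (i + j).val ∧ (i + j).val < hi).card = hi - lo := by
  rw [← card_window n lo hi h, ← card_map (Equiv.addRight j).toEmbedding]
  congr 1
  ext k
  simp only [mem_map, mem_filter, mem_univ, true_and, Equiv.coe_toEmbedding,
    Equiv.coe_addRight]
  constructor
  · rintro ⟨k, hk, rfl⟩
    exact hk
  · intro hk
    exact ⟨k - j, by simpa using hk, by simp⟩

lemma sum_window (n lo hi : ℕ) (h : hi ≤ n) (c : ℝ) :
    ∑ k : Fin n, (if lo ≤ k.val ∧ k.val < hi then c else 0) = ((hi - lo : ℕ) : ℝ) * c := by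
  rw [← sum_filter, sum_const, card_window n lo hi h, nsmul_eq_mul]

lemma mem_indexSet {n : ℕ} (p : indexSet n) : p.1.1 + p.1.2.1 + p.1.2.2 ≤ n :=
  (mem_filter.1 p.2).2.2

/-- A deviating agent adds one user exactly to those resources of its new choice which it was not
already using. Here `b` is the allocation `a` after a deviation of agent `i`. -/
lemma count_deviation {n : ℕ} (G : RAGame n) (a b : G.Alloc) (i : Fin G.m)
    (hne : ∀ k, k ≠ i → b k = a k) (r : G.R) (hr : r ∈ (b i).1) :
    G.count b r = if r ∈ (a i).1 then G.count a r else G.count a r + 1 := by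
  have key : (univ.filter fun k => r ∈ (b k).1) =
      insert i (univ.filter fun k => r ∈ (a k).1) := by
    ext k
    simp only [mem_filter, mem_univ, true_and, mem_insert]
    by_cases hk : k = i
    · subst hk
      simpa using hr
    · simp only [hk, false_or, hne k hk]
  unfold RAGame.count
  rw [key]
  split_ifs with h
  · rw [insert_eq_of_mem (by simpa using h)]
  · rw [card_insert_of_notMem (by simpa using h)]

lemma utility_update {n : ℕ} (G : RAGame n) (f : ℕ → ℝ) (a : G.Alloc) (i : Fin G.m)
    (s : {s : Finset G.R // s ∈ G.A i}) :
    G.utility f (Function.update a i s) i =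
      ∑ r ∈ s.1, G.v r * f (if r ∈ (a i).1 then G.count a r else G.count a r + 1) := by
  have hi : (Function.update a i s : G.Alloc) i = s := Function.update_self i s a
  have hne : ∀ k, k ≠ i → (Function.update a i s : G.Alloc) k = a k :=
    fun k hk => Function.update_of_ne hk s a
  generalize (Function.update a i s : G.Alloc) = b at hi hne
  subst hi
  exact sum_congr rfl fun r hr => by rw [count_deviation G a b i hne r hr]

/-- The choice of agent `i` at equilibrium: the positions `[0, a + x)` of every cycle. The trivial
lower bound makes it a window of the same form as the one in `opt`. -/
def eq (n : ℕ) [NeZero n] (i : Fin n) : Finset (indexSet n × Fin n) :=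
  univ.filter fun r => 0 ≤ (i + r.2).val ∧ (i + r.2).val < r.1.1.1 + r.1.1.2.1

/-- The choice of agent `i` at the optimum: the positions `[a, a + x + b)` of every cycle. -/
def opt (n : ℕ) [NeZero n] (i : Fin n) : Finset (indexSet n × Fin n) :=
  univ.filter fun r => r.1.1.1 ≤ (i + r.2).val ∧
    (i + r.2).val < r.1.1.1 + r.1.1.2.1 + r.1.1.2.2

/-- The game with `n` resources of value `θ p / n` for each index `p`, in which each agent chooses
between its equilibrium and its optimal set of positions. -/
noncomputable def game (n : ℕ) [NeZero n] (θ : ℕ × ℕ × ℕ → ℝ)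
    (hθ : ∀ p ∈ indexSet n, 0 ≤ θ p) : RAGame n where
  R := indexSet n × Fin n
  v r := θ r.1 / n
  v_nonneg r := div_nonneg (hθ _ r.1.2) (Nat.cast_nonneg n)
  m := n
  m_le := le_rfl
  A i := {eq n i, opt n i}
  A_ne i := ⟨eq n i, by simp⟩

section
variable {n : ℕ} [NeZero n] (θ : ℕ × ℕ × ℕ → ℝ) (hθ : ∀ p ∈ indexSet n, 0 ≤ θ p)

/-- The allocation in which every agent makes its equilibrium choice. -/
noncomputable def allocEq : (game n θ hθ).Alloc :=
  fun i => ⟨eq n i, mem_insert_self _ _⟩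

/-- The allocation in which every agent makes its optimal choice. -/
noncomputable def allocOpt : (game n θ hθ).Alloc :=
  fun i => ⟨opt n i, mem_insert_of_mem (mem_singleton_self _)⟩

lemma count_allocEq (r : indexSet n × Fin n) :
    (game n θ hθ).count (allocEq θ hθ) r = r.1.1.1 + r.1.1.2.1 := by
  have h := card_window_shift n 0 (r.1.1.1 + r.1.1.2.1)
    (by have := mem_indexSet r.1; omega) r.2
  rw [Nat.sub_zero] at h
  rw [← h]
  change (univ.filter fun i : Fin n => r ∈ eq n i).card = _
  simp only [eq, mem_filter, mem_univ, true_and]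

lemma count_allocOpt (r : indexSet n × Fin n) :
    (game n θ hθ).count (allocOpt θ hθ) r = r.1.1.2.2 + r.1.1.2.1 := by
  have h := card_window_shift n r.1.1.1 (r.1.1.1 + r.1.1.2.1 + r.1.1.2.2)
    (mem_indexSet r.1) r.2
  rw [show r.1.1.2.2 + r.1.1.2.1 = r.1.1.1 + r.1.1.2.1 + r.1.1.2.2 - r.1.1.1 by omega, ← h]
  change (univ.filter fun i : Fin n => r ∈ opt n i).card = _
  simp only [opt, mem_filter, mem_univ, true_and]

/-- If every resource of type `p` has `c p` users, the welfare is `Σ w(c p) θ p`. -/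
lemma welfare_eq (w : ℕ → ℝ) (hw0 : w 0 = 0) (a : (game n θ hθ).Alloc)
    (c : ℕ × ℕ × ℕ → ℕ)
    (hc : ∀ r : indexSet n × Fin n, (game n θ hθ).count a r = c r.1.1) :
    (game n θ hθ).welfare w a = ∑ p ∈ indexSet n, w (c p) * θ p := by
  have hn : (n : ℝ) ≠ 0 := Nat.cast_ne_zero.2 (NeZero.ne n)
  have h1 : (game n θ hθ).welfare w a =
      ∑ r : indexSet n × Fin n, θ r.1 / n * w (c r.1.1) := by
    unfold RAGame.welfare
    rw [sum_filter]
    refine sum_congr rfl fun r _ => ?_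
    split_ifs with h
    · rw [hc r]
      rfl
    · have h0 : c r.1.1 = 0 := by
        rw [← hc r]
        omega
      rw [h0, hw0, mul_zero]
  rw [h1, Fintype.sum_prod_type, ← sum_coe_sort (indexSet n)]
  refine sum_congr rfl fun p _ => ?_
  simp only [sum_const, card_univ, Fintype.card_fin, nsmul_eq_mul]
  field_simp

/-- On each cycle an agent uses `a + x` resources, each shared by `a + x` agents. -/
lemma utility_allocEq (f : ℕ → ℝ) (i : Fin n) :
    (game n θ hθ).utility f (allocEq θ hθ) i =
      ∑ p ∈ indexSet n, ((p.1 + p.2.1 : ℕ) : ℝ) * (θ p / n * f (p.1 + p.2.1)) := by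
  have h1 : (game n θ hθ).utility f (allocEq θ hθ) i =
      ∑ r ∈ eq n i, θ r.1 / n * f (r.1.1.1 + r.1.1.2.1) :=
    sum_congr rfl fun r _ => by rw [count_allocEq θ hθ r]; rfl
  rw [h1, eq, sum_filter, Fintype.sum_prod_type, ← sum_coe_sort (indexSet n)]
  refine sum_congr rfl fun p _ => ?_
  have h2 := sum_window n 0 (p.1.1 + p.1.2.1) (by have := mem_indexSet p; omega)
    (θ p / n * f (p.1.1 + p.1.2.1))
  rw [Nat.sub_zero] at h2
  rw [← h2]
  exact Equiv.sum_comp (Equiv.addLeft i) fun k : Fin n =>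
    if 0 ≤ k.val ∧ k.val < p.1.1 + p.1.2.1 then θ p / n * f (p.1.1 + p.1.2.1) else 0

/-- The utility of agent `i` after deviating to its optimal choice: on each cycle, `x` of the newly
chosen resources were used by the agent before, and `b` were not. -/
lemma utility_update_opt (f : ℕ → ℝ) (i : Fin n) (s : {s // s ∈ (game n θ hθ).A i})
    (hs : s.1 = opt n i) :
    (game n θ hθ).utility f (Function.update (allocEq θ hθ) i s) i =
      ∑ p ∈ indexSet n, ((p.2.1 : ℝ) * (θ p / n * f (p.1 + p.2.1)) +
        (p.2.2 : ℝ) * (θ p / n * f (p.1 + p.2.1 + 1))) := by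
  have h1 : (game n θ hθ).utility f (Function.update (allocEq θ hθ) i s) i =
      ∑ r ∈ opt n i, θ r.1 / n * f (if r ∈ eq n i then r.1.1.1 + r.1.1.2.1
        else r.1.1.1 + r.1.1.2.1 + 1) := by
    refine (utility_update (game n θ hθ) f (allocEq θ hθ) i s).trans ?_
    rw [hs]
    exact sum_congr rfl fun r _ => by
      rw [count_allocEq θ hθ r]
      rfl
  rw [h1, opt, sum_filter, Fintype.sum_prod_type, ← sum_coe_sort (indexSet n)]
  refine sum_congr rfl fun p _ => ?_
  have hp := mem_indexSet p
  have h2 := sum_window n p.1.1 (p.1.1 + p.1.2.1) (by omega)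
    (θ p / n * f (p.1.1 + p.1.2.1))
  have h3 := sum_window n (p.1.1 + p.1.2.1) (p.1.1 + p.1.2.1 + p.1.2.2) hp
    (θ p / n * f (p.1.1 + p.1.2.1 + 1))
  rw [Nat.add_sub_cancel_left] at h2 h3
  rw [← h2, ← h3, ← sum_add_distrib]
  refine Eq.trans ?_ (Equiv.sum_comp (Equiv.addLeft i) _)
  refine sum_congr rfl fun j _ => ?_
  simp only [eq, mem_filter, mem_univ, true_and, Equiv.coe_addLeft]
  -- Position `i + j` lies in `[a, a + x)`, in `[a + x, a + x + b)`, or outside the window.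
  by_cases hlo : p.1.1 ≤ (i + j).val
  · by_cases hmid : (i + j).val < p.1.1 + p.1.2.1
    · have h4 : (i + j).val < p.1.1 + p.1.2.1 + p.1.2.2 := by omega
      have h5 : ¬ p.1.1 + p.1.2.1 ≤ (i + j).val := by omega
      simp [hlo, hmid, h4, h5]
    · have h5 : p.1.1 + p.1.2.1 ≤ (i + j).val := by omega
      simp [hlo, hmid, h5]
  · have h5 : ¬ p.1.1 + p.1.2.1 ≤ (i + j).val := by omega
    simp [hlo, h5]

lemma isNash_allocEq (f : ℕ → ℝ)
    (hf : 0 ≤ ∑ p ∈ indexSet n,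
      ((p.1 : ℝ) * f (p.1 + p.2.1) - (p.2.2 : ℝ) * f (p.1 + p.2.1 + 1)) * θ p) :
    (game n θ hθ).IsNash f (allocEq θ hθ) := by
  intro i s
  rcases mem_insert.1 s.2 with hs | hs
  · have h : s = allocEq θ hθ i := Subtype.ext hs
    rw [h]
    exact (congrArg (fun b => (game n θ hθ).utility f b i)
      (Function.update_eq_self i (allocEq θ hθ))).le
  · rw [utility_update_opt θ hθ f i s (mem_singleton.1 hs), utility_allocEq θ hθ f i,
      ← sub_nonneg, ← sum_sub_distrib]
    have h := div_nonneg hf (Nat.cast_nonneg (α := ℝ) n)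
    rw [sum_div] at h
    refine h.trans_eq (sum_congr rfl fun p _ => ?_)
    push_cast
    ring

lemma welfare_le_optVal (w : ℕ → ℝ) (a : (game n θ hθ).Alloc) :
    (game n θ hθ).welfare w a ≤ (game n θ hθ).optVal w := by
  have : Finite (game n θ hθ).Alloc := by
    unfold RAGame.Alloc
    infer_instance
  refine le_csSup ?_ ⟨a, rfl⟩
  refine ((Set.finite_range ((game n θ hθ).welfare w)).subset ?_).bddAbove
  rintro _ ⟨b, rfl⟩
  exact ⟨b, rfl⟩

end

end CyclicGame

/-- Tightness of the primal linear program (Lemma 3): every feasible point `θ` of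
the primal LP is realized by a game with exactly `n` agents in `G_{f,w}^n`,
admitting a pure Nash equilibrium of welfare `1` and an allocation whose welfare
equals the primal objective at `θ`. -/
theorem primal_lp_realized_by_game (n : ℕ) (w f : ℕ → ℝ) (hn : 1 ≤ n)
    (hw : ∀ j, 1 ≤ j → j ≤ n → 0 < w j)
    (hw0 : w 0 = 0) (hwn1 : w (n + 1) = 0)
    (hf0 : f 0 = 0) (hfn1 : f (n + 1) = 0)
    (hf1 : 0 < f 1)
    (θ : ℕ × ℕ × ℕ → ℝ) (hθ : PrimalFeasible f w n θ) :
    ∃ G : RAGame n, G.m = n ∧ 0 < G.optVal w ∧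
      (∃ ae : G.Alloc, G.IsNash f ae ∧ G.welfare w ae = 1) ∧
      (∃ aopt : G.Alloc, G.welfare w aopt = primalObj w n θ) := by
  obtain ⟨hpos, hnash, hone⟩ := hθ
  have : NeZero n := ⟨by omega⟩
  have hwe : (CyclicGame.game n θ hpos).welfare w (CyclicGame.allocEq θ hpos) = 1 := by
    rw [CyclicGame.welfare_eq θ hpos w hw0 _ (fun p => p.1 + p.2.1)
      (CyclicGame.count_allocEq θ hpos)]
    exact hone
  refine ⟨CyclicGame.game n θ hpos, rfl, ?_,
    ⟨CyclicGame.allocEq θ hpos, CyclicGame.isNash_allocEq θ hpos f hnash, hwe⟩,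
    ⟨CyclicGame.allocOpt θ hpos, ?_⟩⟩
  · have h := CyclicGame.welfare_le_optVal θ hpos w (CyclicGame.allocEq θ hpos)
    rw [hwe] at h
    linarith
  · exact CyclicGame.welfare_eq θ hpos w hw0 _ (fun p => p.2.2 + p.2.1)
      (CyclicGame.count_allocOpt θ hpos)
end

section
/- Let n ∈ ℕ, let w : {1,…,n} → ℝ with w(j) > 0 for all j, and let f : {1,…,n} → ℝ; set f(0) = w(0) = f(n+1) = w(n+1) = 0. If λ ≥ 0 and μ ∈ ℝ satisfy w(b+x) − μ·w(a+x) + λ·[a·f(a+x) − b·f(a+x+1)] ≤ 0 for all (a,x,b) ∈ I_R, then the same inequality holds for all (a,x,b) ∈ I. -/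
/-- Constraint reduction (Theorem 3, proof part b): if the dual constraints hold
for all indices in the reduced set `I_R`, they hold for all indices in `I`. -/
theorem dual_constraints_reduce (n : ℕ) (w f : ℕ → ℝ)
    (hw : ∀ j, 1 ≤ j → j ≤ n → 0 < w j)
    (hw0 : w 0 = 0) (hwn1 : w (n + 1) = 0)
    (hf0 : f 0 = 0) (hfn1 : f (n + 1) = 0)
    (lam mu : ℝ) (hlam : 0 ≤ lam)
    (h : ∀ p ∈ indexSetR n, DualConstr f w lam mu p) :
    ∀ p ∈ indexSet n, DualConstr f w lam mu p := by
  rintro ⟨a, x, b⟩ hp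
  have hmem : ∀ a x b : ℕ, 1 ≤ a + x + b → a + x + b ≤ n →
      (a = 0 ∨ x = 0 ∨ b = 0 ∨ a + x + b = n) → DualConstr f w lam mu (a, x, b) := by
    intro a x b h1 h2 h3
    apply h
    simp only [indexSetR, indexSet, Finset.mem_filter, Finset.mem_product, Finset.mem_range,
      mul_eq_zero]
    refine ⟨⟨⟨?_, ?_, ?_⟩, h1, h2⟩, ?_⟩ <;> omega
  simp only [indexSet, Finset.mem_filter, Finset.mem_product, Finset.mem_range] at hp
  obtain ⟨-, h1, h2⟩ := hp
  by_cases h0 : a = 0 ∨ b = 0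
  · exact hmem a x b h1 h2 (by tauto)
  -- `m` and `d` are the distances, in the `x` direction, to the upper and lower ends of the line.
  obtain ⟨m, hm⟩ : ∃ m, m = min a b := ⟨_, rfl⟩
  obtain ⟨d, hd⟩ : ∃ d, d = min x (n - (a + x + b)) := ⟨_, rfl⟩
  have hup := hmem (a - m) (x + m) (b - m) (by omega) (by omega) (by omega)
  have hdown := hmem (a + d) (x - d) (b + d) (by omega) (by omega) (by omega)
  simp only [DualConstr] at hup hdown ⊢
  rw [show b - m + (x + m) = b + x by omega, show a - m + (x + m) = a + x by omega,
    Nat.cast_sub (by omega : m ≤ a), Nat.cast_sub (by omega : m ≤ b)] at hup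
  rw [show b + d + (x - d) = b + x by omega, show a + d + (x - d) = a + x by omega,
    Nat.cast_add, Nat.cast_add] at hdown
  have hm0 : (0 : ℝ) < m := by exact_mod_cast (by omega : 0 < m)
  have hd0 : (0 : ℝ) ≤ d := Nat.cast_nonneg d
  -- `(m + d) * E(x) = d * E(x + m) + m * E(x - d)` for the affine left-hand side `E`.
  refine nonpos_of_mul_nonpos_right (a := (m : ℝ) + d) ?_ (by positivity)
  linarith [mul_nonpos_of_nonneg_of_nonpos hd0 hup,
    mul_nonpos_of_nonneg_of_nonpos hm0.le hdown]
end
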